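/- Let S = (n₁,…,n_k) be a tuple of pairwise coprime integers n_i ≥ 2 with k ≥ 1, and let φ : Γ(S) → ℤ^k be the surjective homomorphism with φ(a_i) = e_i and φ(b) = 0. Then the kernel of φ is not finitely generated. In particular, Γ(S) is a finitely presented solvable group that is not polycyclic. -/

import Mathlib

/-- The relators for the group
`Γ(n₁,…,n_k) = ⟨a₁,…,a_k, b ∣ aᵢ⁻¹ b aᵢ = b^{nᵢ}, aᵢaⱼ = aⱼaᵢ (i ≠ j)⟩`.
The generator `aᵢ` is `Sum.inl i` and `b` is `Sum.inr ()`. -/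
def gammaRels {k : ℕ} (n : Fin k → ℕ) : Set (FreeGroup (Fin k ⊕ Unit)) :=
  {r | (∃ i : Fin k,
        r = (FreeGroup.of (Sum.inl i))⁻¹ * FreeGroup.of (Sum.inr ()) *
            FreeGroup.of (Sum.inl i) * (FreeGroup.of (Sum.inr ()) ^ (n i))⁻¹) ∨
      (∃ i j : Fin k, i ≠ j ∧
        r = FreeGroup.of (Sum.inl i) * FreeGroup.of (Sum.inl j) *
            (FreeGroup.of (Sum.inl i))⁻¹ * (FreeGroup.of (Sum.inl j))⁻¹)}

/-- The group `Γ(n₁,…,n_k)` given by the presentation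
`⟨a₁,…,a_k, b ∣ aᵢ⁻¹ b aᵢ = b^{nᵢ}, aᵢaⱼ = aⱼaᵢ (i ≠ j)⟩`. -/
def GammaGroup {k : ℕ} (n : Fin k → ℕ) : Type := PresentedGroup (gammaRels n)

instance {k : ℕ} (n : Fin k → ℕ) : Group (GammaGroup n) := by
  unfold GammaGroup; infer_instance

/-- The generator `aᵢ` of `Γ(n₁,…,n_k)`. -/
def gammaA {k : ℕ} (n : Fin k → ℕ) (i : Fin k) : GammaGroup n :=
  PresentedGroup.of (rels := gammaRels n) (Sum.inl i)

/-- The generator `b` of `Γ(n₁,…,n_k)`. -/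
def gammaB {k : ℕ} (n : Fin k → ℕ) : GammaGroup n :=
  PresentedGroup.of (rels := gammaRels n) (Sum.inr ())

/-- The solvable Baumslag–Solitar group `BS(1,n) = ⟨a, b ∣ a b a⁻¹ = bⁿ⟩`.
The generator `a` is `true` and `b` is `false`. -/
def BS (n : ℕ) : Type :=
  PresentedGroup {FreeGroup.of true * FreeGroup.of false * (FreeGroup.of true)⁻¹ *
    (FreeGroup.of false ^ n)⁻¹}

instance (n : ℕ) : Group (BS n) := by unfold BS; infer_instance

/-- A group is polycyclic if it has a subnormal series with cyclic quotients. -/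
def IsPolycyclic (G : Type*) [Group G] : Prop :=
  ∃ (m : ℕ) (s : Fin (m + 1) → Subgroup G), s 0 = ⊥ ∧ s (Fin.last m) = ⊤ ∧
    ∀ i : Fin m, s i.castSucc ≤ s i.succ ∧
      ∃ hN : ((s i.castSucc).subgroupOf (s i.succ)).Normal,
        (by haveI := hN; exact
          IsCyclic (↥(s i.succ) ⧸ (s i.castSucc).subgroupOf (s i.succ)) : Prop)

/-- A group is finitely presented if it is isomorphic to a group presented by
finitely many generators and finitely many relators. -/
def FinitelyPresentedGroup (G : Type*) [Group G] : Prop :=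
  ∃ (m : ℕ) (rels : Finset (FreeGroup (Fin m))),
    Nonempty (G ≃* PresentedGroup (rels : Set (FreeGroup (Fin m))))

/-!
Let `b` act on `ℚ` as the translation by `1` and `aᵢ` as the multiplication by `nᵢ⁻¹`; this is an
affine representation of `Γ(n₁,…,n_k)`. Every homomorphism to a commutative group that kills `b`
factors through `φ`, so the kernel of `φ` acts by translations; its image is nontrivial and
normalised by the multiplications by `nᵢ⁻¹`. If the kernel were finitely generated, each `nᵢ⁻¹`
would preserve a nonzero finitely generated `ℤ`-submodule of `ℚ`, hence be integral over `ℤ`, which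
forces `nᵢ = 1`. A polycyclic group has only finitely generated subgroups, so `Γ(n₁,…,n_k)` is not
polycyclic either.

Solvability rests on `⟨b⟩ ≤ aᵢ ⟨b⟩ aᵢ⁻¹`: the conjugates `w ⟨b⟩ w⁻¹` by positive words `w` in the
commuting `aᵢ` are directed, so their union is an abelian normal subgroup, and the quotient by it is
generated by the `aᵢ`.
-/

section FiniteGeneration

variable {G H : Type*} [Group G] [Group H]

theorem subgroup_fg_map {K : Subgroup G} (hK : K.FG) (f : G →* H) : (K.map f).FG := by
  rw [Subgroup.fg_iff_submonoid_fg] at hK ⊢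
  exact hK.map f

theorem subgroup_fg_map_iff_of_injective {K : Subgroup G} {f : G →* H} (hf : Function.Injective f) :
    (K.map f).FG ↔ K.FG := by
  refine ⟨fun h ↦ ?_, fun h ↦ subgroup_fg_map h f⟩
  rw [Subgroup.fg_iff_submonoid_fg] at h ⊢
  exact Submonoid.FG.map_injective f hf h

theorem subgroup_fg_of_fg_map_of_fg_inf_ker {f : G →* H} {K : Subgroup G} (hmap : (K.map f).FG)
    (hker : (K ⊓ f.ker).FG) : K.FG := by
  classical
  obtain ⟨S, hS⟩ := hmap
  have hSK : (S : Set H) ⊆ f '' (K : Set G) := by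
    rw [← Subgroup.coe_map, ← hS]
    exact Subgroup.subset_closure
  obtain ⟨T, hTK, rfl⟩ := Finset.subset_set_image_iff.1 hSK
  have hclosure : Subgroup.closure (T : Set G) ≤ K := (Subgroup.closure_le K).2 hTK
  suffices hK : K = Subgroup.closure (T : Set G) ⊔ K ⊓ f.ker by
    rw [hK]
    exact Subgroup.FG.sup ⟨T, rfl⟩ hker
  refine le_antisymm (fun x hx ↦ ?_) (sup_le hclosure inf_le_left)
  have hfx : f x ∈ (Subgroup.closure (T : Set G)).map f := by
    rw [MonoidHom.map_closure, ← Finset.coe_image, hS]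
    exact Subgroup.mem_map_of_mem f hx
  obtain ⟨y, hy, hyx⟩ := hfx
  have hz : y⁻¹ * x ∈ K ⊓ f.ker :=
    ⟨K.mul_mem (K.inv_mem (hclosure hy)) hx, by simp [hyx]⟩
  simpa only [mul_inv_cancel_left] using Subgroup.mul_mem_sup hy hz

theorem subgroup_fg_of_isCyclic [IsCyclic G] (K : Subgroup G) : K.FG := by
  obtain ⟨g, hg⟩ := Subgroup.isCyclic_iff_exists_zpowers_eq_top K |>.1 inferInstance
  exact ⟨{g}, by rw [Finset.coe_singleton, ← Subgroup.zpowers_eq_closure, hg]⟩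

theorem subgroup_fg_of_isCyclic_quotient {A B : Subgroup G} [(A.subgroupOf B).Normal]
    [IsCyclic (B ⧸ A.subgroupOf B)] (hA : ∀ K ≤ A, K.FG) {K : Subgroup G} (hK : K ≤ B) :
    K.FG := by
  rw [← inf_eq_left.2 hK, ← Subgroup.subgroupOf_map_subtype]
  refine subgroup_fg_map (subgroup_fg_of_fg_map_of_fg_inf_ker
    (f := QuotientGroup.mk' (A.subgroupOf B)) (subgroup_fg_of_isCyclic _) ?_) _
  rw [QuotientGroup.ker_mk', ← subgroup_fg_map_iff_of_injective B.subtype_injective]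
  refine hA _ ((Subgroup.map_mono inf_le_right).trans ?_)
  exact (Subgroup.subgroupOf_map_subtype A B).trans_le inf_le_left

theorem IsPolycyclic.subgroup_fg (hG : IsPolycyclic G) (K : Subgroup G) : K.FG := by
  obtain ⟨m, s, hbot, htop, hs⟩ := hG
  suffices h : ∀ i, ∀ K ≤ s i, K.FG from h (Fin.last m) K (htop ▸ le_top)
  intro i
  induction i using Fin.induction with
  | zero =>
    intro K hK
    rw [hbot, le_bot_iff] at hK
    exact hK ▸ Subgroup.FG.bot
  | succ i ih =>
    obtain ⟨-, hnormal, hcyclic⟩ := hs i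
    exact fun K hK ↦ subgroup_fg_of_isCyclic_quotient ih hK

end FiniteGeneration

theorem finitelyPresentedGroup_presentedGroup {α : Type*} [Finite α] {rels : Set (FreeGroup α)}
    (hrels : rels.Finite) : FinitelyPresentedGroup (PresentedGroup rels) := by
  obtain ⟨m, ⟨e⟩⟩ := Finite.exists_equiv_fin α
  have himage := hrels.image (FreeGroup.freeGroupCongr e)
  refine ⟨m, himage.toFinset, ?_⟩
  rw [himage.coe_toFinset]
  exact ⟨PresentedGroup.equivPresentedGroup rels e⟩

section Solvability

open scoped Pointwise

variable {G : Type*} [Group G]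

theorem isSolvable_of_sup_eq_top {N K : Subgroup G} [N.Normal] [Group.IsSolvable N]
    [Group.IsSolvable K] (hNK : N ⊔ K = ⊤) : Group.IsSolvable G := by
  have hquotient : Group.IsSolvable (G ⧸ N) := by
    refine Group.isSolvable_of_surjective (f := (QuotientGroup.mk' N).comp K.subtype) ?_
    rw [← MonoidHom.range_eq_top, MonoidHom.range_comp, Subgroup.range_subtype,
      ← Subgroup.map_top_of_surjective _ (QuotientGroup.mk'_surjective N), ← hNK,
      Subgroup.map_sup, QuotientGroup.map_mk'_self, bot_sup_eq]
  exact (Group.isSolvable_iff_subgroup_quotient N).2 ⟨inferInstance, hquotient⟩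

/-- The elements `w` that expand `B` under conjugation, in the sense that `B ≤ w B w⁻¹`. -/
def expandingSubmonoid (B : Subgroup G) : Submonoid G where
  carrier := {w | B ≤ MulAut.conj w • B}
  one_mem' := by simp
  mul_mem' {v w} hv hw := by
    rw [Set.mem_ofPred_eq, map_mul, mul_smul]
    exact le_trans hv (Subgroup.pointwise_smul_le_pointwise_smul_iff.2 hw)

/-- The subgroup generated by the conjugates `w B w⁻¹` with `w` in the submonoid `P`; when `P` is
commutative and expands `B`, it is their directed union. -/
def ascendingUnion (P : Submonoid G) (B : Subgroup G) : Subgroup G :=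
  ⨆ w : P, MulAut.conj (w : G) • B

variable {P : Submonoid G} {B : Subgroup G}

theorem conj_smul_le_ascendingUnion {w : G} (hw : w ∈ P) :
    MulAut.conj w • B ≤ ascendingUnion P B :=
  le_iSup (fun v : P ↦ MulAut.conj (v : G) • B) ⟨w, hw⟩

theorem le_ascendingUnion : B ≤ ascendingUnion P B := by
  simpa only [map_one, one_smul] using conj_smul_le_ascendingUnion (B := B) P.one_mem

variable [IsMulCommutative P]

theorem directed_conj_smul (hP : P ≤ expandingSubmonoid B) :
    Directed (· ≤ ·) fun w : P ↦ MulAut.conj (w : G) • B := by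
  have hle (v w : P) : MulAut.conj (v : G) • B ≤ MulAut.conj ((v * w : P) : G) • B := by
    rw [Submonoid.coe_mul, map_mul, mul_smul]
    exact Subgroup.pointwise_smul_le_pointwise_smul_iff.2 (hP w.2)
  exact fun v w ↦ ⟨v * w, hle v w, mul_comm' w v ▸ hle w v⟩

theorem isMulCommutative_ascendingUnion [IsMulCommutative B] (hP : P ≤ expandingSubmonoid B) :
    IsMulCommutative (ascendingUnion P B) := by
  have (w : P) : IsMulCommutative (MulAut.conj (w : G) • B : Subgroup G) :=
    Subgroup.map_isMulCommutative B _
  exact Subgroup.isMulCommutative_iSup (directed_conj_smul hP)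

theorem conj_smul_ascendingUnion (hP : P ≤ expandingSubmonoid B) {w : G} (hw : w ∈ P) :
    MulAut.conj w • ascendingUnion P B = ascendingUnion P B := by
  apply le_antisymm
  · rw [Subgroup.pointwise_smul_subset_iff]
    refine iSup_le fun v ↦ Subgroup.pointwise_smul_subset_iff.1 ?_
    rw [← mul_smul, ← map_mul]
    exact conj_smul_le_ascendingUnion (mul_mem hw v.2)
  · refine iSup_le fun v ↦ ?_
    have hvw : (v * w : G) = w * v := congrArg Subtype.val (mul_comm' v ⟨w, hw⟩)
    calc MulAut.conj (v : G) • B ≤ MulAut.conj (v : G) • MulAut.conj w • B :=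
          Subgroup.pointwise_smul_le_pointwise_smul_iff.2 (hP hw)
      _ = MulAut.conj w • MulAut.conj (v : G) • B := by
          simp only [← mul_smul, ← map_mul, hvw]
      _ ≤ MulAut.conj w • ascendingUnion P B :=
          Subgroup.pointwise_smul_le_pointwise_smul_iff.2 (conj_smul_le_ascendingUnion v.2)

theorem normal_ascendingUnion (hP : P ≤ expandingSubmonoid B)
    (hgen : Subgroup.closure (P : Set G) ⊔ B = ⊤) : (ascendingUnion P B).Normal := by
  rw [← Subgroup.normalizer_eq_top_iff, eq_top_iff, ← hgen, sup_le_iff, Subgroup.closure_le]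
  refine ⟨fun w hw ↦ ?_, le_ascendingUnion.trans Subgroup.le_normalizer⟩
  exact Subgroup.mem_normalizer_iff_map_conj_eq.2 (conj_smul_ascendingUnion hP hw)

theorem isSolvable_of_le_conj_smul {A : Set G} {B : Subgroup G} [IsMulCommutative B]
    (hcomm : ∀ v ∈ A, ∀ w ∈ A, v * w = w * v) (hA : ∀ w ∈ A, B ≤ MulAut.conj w • B)
    (hgen : Subgroup.closure A ⊔ B = ⊤) : Group.IsSolvable G := by
  have hPcomm : IsMulCommutative (Submonoid.closure A) :=
    Submonoid.isMulCommutative_closure G hcomm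
  have hP : Submonoid.closure A ≤ expandingSubmonoid B := Submonoid.closure_le.2 hA
  let N := ascendingUnion (Submonoid.closure A) B
  have hNnormal : N.Normal := by
    refine normal_ascendingUnion hP (top_le_iff.1 (hgen.ge.trans ?_))
    gcongr
    exact Submonoid.subset_closure
  have hNcomm : IsMulCommutative N := isMulCommutative_ascendingUnion hP
  have hNsolvable : Group.IsSolvable N := Group.isSolvable_of_comm mul_comm'
  have hAcomm : IsMulCommutative (Subgroup.closure A) := Subgroup.isMulCommutative_closure hcomm
  have hAsolvable : Group.IsSolvable (Subgroup.closure A) := Group.isSolvable_of_comm mul_comm'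
  refine isSolvable_of_sup_eq_top (N := N) (K := Subgroup.closure A) (top_le_iff.1 ?_)
  rw [← hgen, sup_comm]
  exact sup_le_sup_right le_ascendingUnion _

end Solvability

section AffineGroup

/-- The action of the units of `A` by scalars on the translations of the `A`-module `V`; the
semidirect product `AffineGroup A V` is formed along it. -/
def scalarAction (A V : Type*) [Ring A] [AddCommGroup V] [Module A V] :
    Aˣ →* MulAut (Multiplicative V) :=
  (MulAutMultiplicative V).symm.toMonoidHom.comp (DistribMulAction.toAddAut Aˣ V)

/-- The group of affine maps `v ↦ u • v + w` of the `A`-module `V` with `u` a unit of `A`; the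
translation part `w` is the left component and the multiplier `u` the right one. -/
abbrev AffineGroup (A V : Type*) [Ring A] [AddCommGroup V] [Module A V] : Type _ :=
  Multiplicative V ⋊[scalarAction A V] Aˣ

namespace AffineGroup

open SemidirectProduct

section Module

variable {A V : Type*} [Ring A] [AddCommGroup V] [Module A V]

theorem scalarAction_ofAdd (u : Aˣ) (v : V) :
    scalarAction A V u (Multiplicative.ofAdd v) = Multiplicative.ofAdd ((u : A) • v) := rfl

theorem conj_inl (g : AffineGroup A V) (v : V) :
    g * inl (Multiplicative.ofAdd v) * g⁻¹ =
      inl (Multiplicative.ofAdd ((g.right : A) • v)) := by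
  rw [← scalarAction_ofAdd]
  ext <;> simp [mul_inv_cancel_comm]

/-- The vectors `v` such that `N` contains the translation by `v`, as a `ℤ`-module. -/
def translationModule (N : Subgroup (AffineGroup A V)) : Submodule ℤ V :=
  AddSubgroup.toIntSubmodule (N.comap inl).toAddSubgroup'

variable {N : Subgroup (AffineGroup A V)}

theorem mem_translationModule {v : V} :
    v ∈ translationModule N ↔ inl (Multiplicative.ofAdd v) ∈ N := Iff.rfl

theorem map_inl_comap_inl (hN : N ≤ rightHom.ker) : (N.comap inl).map inl = N :=
  Subgroup.map_comap_eq_self (hN.trans_eq range_inl_eq_ker_rightHom.symm)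

theorem translationModule_fg (hN : N ≤ rightHom.ker) (hfg : N.FG) :
    (translationModule N).FG := by
  rw [Submodule.fg_iff_addSubgroup_fg, AddSubgroup.fg_iff_mul_fg]
  rw [← map_inl_comap_inl hN, subgroup_fg_map_iff_of_injective inl_injective] at hfg
  exact hfg

theorem translationModule_ne_bot (hN : N ≤ rightHom.ker) (hne : N ≠ ⊥) :
    translationModule N ≠ ⊥ := by
  contrapose! hne
  rw [← map_inl_comap_inl hN, Subgroup.map_eq_bot_iff_of_injective _ inl_injective,
    Subgroup.eq_bot_iff_forall]
  exact fun v hv ↦ (Submodule.eq_bot_iff _).1 hne v hv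

theorem smul_mem_translationModule {g : AffineGroup A V} (hg : g ∈ Subgroup.normalizer N) {v : V}
    (hv : v ∈ translationModule N) : (g.right : A) • v ∈ translationModule N := by
  rw [mem_translationModule, ← conj_inl]
  exact (Subgroup.mem_normalizer_iff.1 hg _).1 hv

end Module

theorem isIntegral_right_of_mem_normalizer {A V : Type*} [CommRing A] [IsDomain A] [AddCommGroup V]
    [Module A V] [Module.IsTorsionFree A V] {N : Subgroup (AffineGroup A V)}
    (hN : N ≤ rightHom.ker) (hne : N ≠ ⊥) (hfg : N.FG) {g : AffineGroup A V}
    (hg : g ∈ Subgroup.normalizer N) : IsIntegral ℤ (g.right : A) :=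
  isIntegral_of_smul_mem_submodule (translationModule N) (translationModule_ne_bot hN hne)
    (translationModule_fg hN hfg) _ fun _ ↦ smul_mem_translationModule hg

end AffineGroup

end AffineGroup

theorem natCast_eq_one_of_isIntegral_inv {n : ℕ} (hn : n ≠ 0) (h : IsIntegral ℤ (n : ℚ)⁻¹) :
    n = 1 := by
  obtain ⟨m, hm⟩ := IsIntegrallyClosed.isIntegral_iff.1 h
  have hmn : m * n = 1 := by
    rw [eq_intCast, ← mul_eq_one_iff_eq_inv₀ (Nat.cast_ne_zero.2 hn)] at hm
    exact_mod_cast hm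
  exact_mod_cast Int.eq_one_of_mul_eq_one_left (by positivity) hmn

namespace GammaGroup

variable {k : ℕ} {n : Fin k → ℕ}

theorem finite_gammaRels (n : Fin k → ℕ) : (gammaRels n).Finite := by
  have hconj := Set.finite_range fun i : Fin k ↦
    (FreeGroup.of (Sum.inl i : Fin k ⊕ Unit))⁻¹ * FreeGroup.of (Sum.inr ()) *
      FreeGroup.of (Sum.inl i) * (FreeGroup.of (Sum.inr ()) ^ n i)⁻¹
  have hcomm := Set.finite_range fun p : Fin k × Fin k ↦
    FreeGroup.of (Sum.inl p.1 : Fin k ⊕ Unit) * FreeGroup.of (Sum.inl p.2) *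
      (FreeGroup.of (Sum.inl p.1))⁻¹ * (FreeGroup.of (Sum.inl p.2))⁻¹
  refine (hconj.union hcomm).subset ?_
  rintro _ (⟨i, rfl⟩ | ⟨i, j, -, rfl⟩)
  · exact Or.inl ⟨i, rfl⟩
  · exact Or.inr ⟨(i, j), rfl⟩

theorem finitelyPresentedGroup (n : Fin k → ℕ) : FinitelyPresentedGroup (GammaGroup n) :=
  finitelyPresentedGroup_presentedGroup (finite_gammaRels n)

theorem inv_gammaA_mul_gammaB_mul_gammaA (n : Fin k → ℕ) (i : Fin k) :
    (gammaA n i)⁻¹ * gammaB n * gammaA n i = gammaB n ^ n i :=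
  mul_inv_eq_one.1 (PresentedGroup.one_of_mem (rels := gammaRels n) (Or.inl ⟨i, rfl⟩))

theorem gammaA_mul_comm (n : Fin k → ℕ) (i j : Fin k) :
    gammaA n i * gammaA n j = gammaA n j * gammaA n i := by
  rcases eq_or_ne i j with rfl | hij
  · rfl
  · exact mul_inv_eq_iff_eq_mul.1 (mul_inv_eq_one.1
      (PresentedGroup.one_of_mem (rels := gammaRels n) (Or.inr ⟨i, j, hij, rfl⟩)))

theorem closure_gammaA_sup_zpowers_gammaB (n : Fin k → ℕ) :
    Subgroup.closure (Set.range (gammaA n)) ⊔ Subgroup.zpowers (gammaB n) = ⊤ := by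
  rw [Subgroup.zpowers_eq_closure, ← Subgroup.closure_union, eq_top_iff]
  refine (PresentedGroup.closure_range_of (gammaRels n)).ge.trans (Subgroup.closure_mono ?_)
  rintro _ ⟨i | _, rfl⟩
  · exact Or.inl ⟨i, rfl⟩
  · exact Or.inr rfl

theorem isSolvable (n : Fin k → ℕ) : Group.IsSolvable (GammaGroup n) := by
  refine isSolvable_of_le_conj_smul (B := Subgroup.zpowers (gammaB n)) ?_ ?_
    (closure_gammaA_sup_zpowers_gammaB n)
  · rintro _ ⟨i, rfl⟩ _ ⟨j, rfl⟩
    exact gammaA_mul_comm n i j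
  · rintro _ ⟨i, rfl⟩
    rw [Subgroup.zpowers_le, Subgroup.mem_pointwise_smul_iff_inv_smul_mem]
    simp [inv_gammaA_mul_gammaB_mul_gammaA]

section UniversalProperty

variable {H : Type*} [Group H]

/-- The homomorphism out of `Γ(n₁,…,n_k)` with prescribed images of the generators `aᵢ` and `b`
that satisfy the defining relations. -/
def lift (a : Fin k → H) (b : H) (hab : ∀ i, (a i)⁻¹ * b * a i = b ^ n i)
    (ha : ∀ i j, a i * a j = a j * a i) : GammaGroup n →* H :=
  PresentedGroup.toGroup (rels := gammaRels n) (f := Sum.elim a fun _ ↦ b) <| by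
    rintro _ (⟨i, rfl⟩ | ⟨i, j, -, rfl⟩)
    · simp [hab]
    · simp [ha i j]

variable {a : Fin k → H} {b : H} {hab : ∀ i, (a i)⁻¹ * b * a i = b ^ n i}
  {ha : ∀ i j, a i * a j = a j * a i}

theorem lift_gammaA (i : Fin k) : lift a b hab ha (gammaA n i) = a i :=
  PresentedGroup.toGroup.of _

theorem lift_gammaB : lift a b hab ha (gammaB n) = b :=
  PresentedGroup.toGroup.of _

theorem hom_ext {f g : GammaGroup n →* H} (hA : ∀ i, f (gammaA n i) = g (gammaA n i))
    (hB : f (gammaB n) = g (gammaB n)) : f = g :=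
  PresentedGroup.ext (rels := gammaRels n) <| by
    rintro (i | _)
    exacts [hA i, hB]

end UniversalProperty

theorem ker_le_ker_of_map_gammaB_eq_one {H : Type*} [CommGroup H]
    {φ : GammaGroup n →* Multiplicative (Fin k → ℤ)}
    (hA : ∀ i, φ (gammaA n i) = Multiplicative.ofAdd (Pi.single i 1)) (hB : φ (gammaB n) = 1)
    {f : GammaGroup n →* H} (hf : f (gammaB n) = 1) : φ.ker ≤ f.ker := by
  let χ : Multiplicative (Fin k → ℤ) →* H := AddMonoidHom.toMultiplicativeLeft
    (Fintype.linearCombination ℤ fun i ↦ Additive.ofMul (f (gammaA n i))).toAddMonoidHom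
  have hfactor : f = χ.comp φ := by
    refine hom_ext (fun i ↦ ?_) ?_
    · simp [χ, hA, Fintype.linearCombination_apply_single]
    · rw [MonoidHom.comp_apply, hB, map_one, hf]
  rw [hfactor, ← MonoidHom.comap_ker]
  exact MonoidHom.ker_le_comap _ _

open SemidirectProduct

/-- The affine representation of `Γ(n₁,…,n_k)` on `ℚ`: `b` acts as the translation by `1` and `aᵢ`
as the multiplication by `nᵢ⁻¹`. -/
def affineRep (hn : ∀ i, n i ≠ 0) : GammaGroup n →* AffineGroup ℚ ℚ :=
  lift (fun i ↦ inr (Units.mk0 (n i : ℚ) (Nat.cast_ne_zero.2 (hn i)))⁻¹)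
    (inl (Multiplicative.ofAdd 1))
    (fun i ↦ by
      rw [← map_inv, inv_inv, map_inv inr, AffineGroup.conj_inl, ← map_pow, ← ofAdd_nsmul]
      simp)
    (fun i j ↦ by rw [← map_mul, mul_comm, map_mul])

theorem right_affineRep_gammaA (hn : ∀ i, n i ≠ 0) (i : Fin k) :
    ((affineRep hn (gammaA n i)).right : ℚ) = (n i : ℚ)⁻¹ := by
  simp [affineRep, lift_gammaA]

theorem affineRep_gammaB (hn : ∀ i, n i ≠ 0) :
    affineRep hn (gammaB n) = inl (Multiplicative.ofAdd 1) :=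
  lift_gammaB

theorem eq_one_of_ker_fg (hn : ∀ i, n i ≠ 0) {φ : GammaGroup n →* Multiplicative (Fin k → ℤ)}
    (hA : ∀ i, φ (gammaA n i) = Multiplicative.ofAdd (Pi.single i 1)) (hB : φ (gammaB n) = 1)
    (hfg : φ.ker.FG) (i : Fin k) : n i = 1 := by
  have htranslation : φ.ker.map (affineRep hn) ≤ rightHom.ker := by
    rw [Subgroup.map_le_iff_le_comap, MonoidHom.comap_ker]
    exact ker_le_ker_of_map_gammaB_eq_one hA hB (by simp [affineRep_gammaB])
  have hne : φ.ker.map (affineRep hn) ≠ ⊥ := fun hbot ↦ by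
    have hmem : affineRep hn (gammaB n) ∈ φ.ker.map (affineRep hn) :=
      Subgroup.mem_map_of_mem _ hB
    rw [hbot, Subgroup.mem_bot, affineRep_gammaB, ← map_one inl] at hmem
    exact one_ne_zero (Multiplicative.ofAdd.injective (inl_injective hmem) : (1 : ℚ) = 0)
  have hnormalizer :
      affineRep hn (gammaA n i) ∈ Subgroup.normalizer (φ.ker.map (affineRep hn)) := by
    refine Subgroup.le_normalizer_map _ (Subgroup.mem_map_of_mem _ ?_)
    rw [Subgroup.normalizer_eq_top]
    exact Subgroup.mem_top _
  have hintegral := AffineGroup.isIntegral_right_of_mem_normalizer htranslation hne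
    (subgroup_fg_map hfg _) hnormalizer
  rw [right_affineRep_gammaA] at hintegral
  exact natCast_eq_one_of_isIntegral_inv (hn i) hintegral

end GammaGroup

theorem gammaGroup_ker_not_fg_general {k : ℕ} (n : Fin k → ℕ) (hn : ∀ i, n i ≠ 0)
    (hne : ∃ i, n i ≠ 1) (φ : GammaGroup n →* Multiplicative (Fin k → ℤ))
    (hA : ∀ i : Fin k, φ (gammaA n i) = Multiplicative.ofAdd (Pi.single i 1))
    (hB : φ (gammaB n) = 1) :
    ¬ Group.FG (MonoidHom.ker φ) ∧
      FinitelyPresentedGroup (GammaGroup n) ∧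
      Group.IsSolvable (GammaGroup n) ∧
      ¬ IsPolycyclic (GammaGroup n) := by
  have hker : ¬ φ.ker.FG := fun hfg ↦
    hne.elim fun i hi ↦ hi (GammaGroup.eq_one_of_ker_fg hn hA hB hfg i)
  exact ⟨(Group.fg_iff_subgroup_fg φ.ker).not.2 hker, GammaGroup.finitelyPresentedGroup n,
    GammaGroup.isSolvable n, fun hpoly ↦ hker (hpoly.subgroup_fg φ.ker)⟩

/-- The kernel of the projection `φ : Γ(S) → ℤ^k` is not finitely generated;
in particular `Γ(S)` is a finitely presented solvable group which is not
polycyclic. -/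
theorem gammaGroup_ker_not_fg {k : ℕ} (n : Fin k → ℕ) (hk : 1 ≤ k)
    (hn2 : ∀ i, 2 ≤ n i) (hcop : ∀ i j, i ≠ j → Nat.Coprime (n i) (n j))
    (φ : GammaGroup n →* Multiplicative (Fin k → ℤ))
    (hsurj : Function.Surjective φ)
    (hA : ∀ i : Fin k, φ (gammaA n i) = Multiplicative.ofAdd (Pi.single i 1))
    (hB : φ (gammaB n) = 1) :
    ¬ Group.FG (MonoidHom.ker φ) ∧
      FinitelyPresentedGroup (GammaGroup n) ∧
      IsSolvable (GammaGroup n) ∧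
      ¬ IsPolycyclic (GammaGroup n) :=
  gammaGroup_ker_not_fg_general n (fun i ↦ by have := hn2 i; omega)
    ⟨⟨0, hk⟩, by have := hn2 ⟨0, hk⟩; omega⟩ φ hA hB
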